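/- Let L be a field and σ an automorphism of L, with fixed field F = {x ∈ L : σ(x) = x}. Let r ≥ 0 be an integer strictly smaller than the order of σ in Aut(L), and let a_0,…,a_{r−1} ∈ L. Then V = {x ∈ L : σ^r(x) + Σ_{i=0}^{r−1} a_i σ^i(x) = 0} is an F-subspace of L of dimension at most r. -/

import Mathlib

open scoped Classical
noncomputable section

theorem exists_fixed_vec {L ι : Type} [Field L] [Fintype ι] (τ : L ≃+* L)
    (W : Submodule L (ι → L)) (hW : ∀ c ∈ W, (fun j => τ (c j)) ∈ W)
    (hne : ∃ c ∈ W, c ≠ 0) : ∃ c ∈ W, c ≠ 0 ∧ ∀ j, τ (c j) = c j := by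
  classical
  let P : ℕ → Prop := fun n => ∃ c ∈ W, c ≠ 0 ∧ (Finset.univ.filter (fun j => c j ≠ 0)).card = n
  have hP : ∃ n, P n := by
    obtain ⟨c, hc, h0⟩ := hne
    exact ⟨_, c, hc, h0, rfl⟩
  obtain ⟨c, hc, h0, hcard⟩ := Nat.find_spec hP
  obtain ⟨j, hj⟩ := Function.ne_iff.mp h0
  have hj' : c j ≠ 0 := hj
  let d : ι → L := (c j)⁻¹ • c
  have hd : d ∈ W := W.smul_mem _ hc
  have hdj : d j = 1 := by simp [d, hj']
  refine ⟨d, hd, fun h => by simp [h] at hdj, ?_⟩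
  by_contra! hcon
  obtain ⟨k, hk⟩ := hcon
  let e : ι → L := (fun j => τ (d j)) - d
  have he : e ∈ W := W.sub_mem (hW d hd) hd
  have he0 : e ≠ 0 := fun h => hk (sub_eq_zero.mp (congrFun h k))
  have hmin := Nat.find_min' hP ⟨e, he, he0, rfl⟩
  rw [← hcard] at hmin
  refine absurd hmin (not_le.mpr (Finset.card_lt_card ?_))
  rw [Finset.ssubset_iff_of_subset]
  · refine ⟨j, by simpa using hj', ?_⟩
    simp [e, hdj]
  · intro m hm
    simp only [Finset.mem_filter, Finset.mem_univ, true_and] at hm ⊢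
    intro h
    apply hm
    simp [e, d, h]

/-- **Statement 6.** Let `L` be a field and `σ` an automorphism of `L`, with fixed field
`F = {x ∈ L : σ(x) = x}`.  Let `r ≥ 0` be an integer strictly smaller than the order of
`σ` in `Aut(L)` (where infinite order is recorded as `orderOf σ = 0`), and let
`a₀,…,a_{r-1} ∈ L`.  Then `V = {x ∈ L : σ^r(x) + Σ_{i<r} aᵢ σ^i(x) = 0}` is an
`F`-subspace of `L` of dimension at most `r`. -/
theorem semilinear_equation_solutions_dimension_le
    (L : Type) [Field L] (σ : L ≃+* L) (r : ℕ)
    (hr : orderOf σ = 0 ∨ r < orderOf σ) (a : Fin r → L) :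
    ∃ Fsub : Subfield L, (Fsub : Set L) = {x : L | σ x = x} ∧
      ∃ V : Submodule Fsub L,
        (V : Set L) = {x : L | (σ : L → L)^[r] x + ∑ i : Fin r, a i * (σ : L → L)^[i] x = 0} ∧
        Module.rank Fsub V ≤ r := by
  refine ⟨RingHom.eqLocusField (σ : L →+* L) (RingHom.id L), by ext x; rfl, ?_⟩
  set F := RingHom.eqLocusField (σ : L →+* L) (RingHom.id L) with hF
  have hit : ∀ (n : ℕ) (c : F) (x : L),
      (σ : L → L)^[n] (c * x) = c * (σ : L → L)^[n] x := by
    intro n c x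
    have hc : σ (c : L) = c := c.2
    induction n with
    | zero => rfl
    | succ n ih => rw [Function.iterate_succ_apply', ih, map_mul, hc,
        Function.iterate_succ_apply']
  have hadd : ∀ (n : ℕ) (x y : L),
      (σ : L → L)^[n] (x + y) = (σ : L → L)^[n] x + (σ : L → L)^[n] y := by
    intro n x y
    exact iterate_map_add σ n x y
  have hzero : ∀ (n : ℕ), (σ : L → L)^[n] 0 = 0 := fun n => iterate_map_zero σ n
  let V : Submodule F L :=
    { carrier := {x : L | (σ : L → L)^[r] x + ∑ i : Fin r, a i * (σ : L → L)^[i] x = 0}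
      add_mem' := by
        intro x y hx hy
        simp only [Set.mem_ofPred_eq] at hx hy ⊢
        simp only [hadd, mul_add, Finset.sum_add_distrib]
        linear_combination hx + hy
      zero_mem' := by simp [hzero]
      smul_mem' := by
        intro c x hx
        simp only [Set.mem_ofPred_eq] at hx ⊢
        have hs : c • x = (c : L) * x := rfl
        simp only [hs, hit, mul_left_comm _ (c : L), ← Finset.mul_sum]
        linear_combination (c : L) * hx }
  refine ⟨V, rfl, ?_⟩
  apply rank_le
  intro s hs
  by_contra! hlt
  let f : (s → L) →ₗ[L] (Fin r → L) :=
    LinearMap.pi fun i => ∑ j : s, ((σ : L → L)^[i] ((j : V) : L)) • LinearMap.proj j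
  have hf : ∀ c, c ∈ LinearMap.ker f ↔
      ∀ i : Fin r, ∑ j : s, ((σ : L → L)^[i] ((j : V) : L)) * c j = 0 := by
    intro c
    rw [LinearMap.mem_ker, funext_iff]
    simp [f]
  have hfr : ∀ c ∈ LinearMap.ker f, ∀ i : ℕ, i ≤ r →
      ∑ j : s, ((σ : L → L)^[i] ((j : V) : L)) * c j = 0 := by
    intro c hc i hi
    rw [hf] at hc
    rcases hi.lt_or_eq with h | rfl
    · exact hc ⟨i, h⟩
    · have h1 : ∀ j : s, (σ : L → L)^[i] ((j : V) : L) * c j =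
          - ∑ k : Fin i, a k * ((σ : L → L)^[k] ((j : V) : L) * c j) := by
        intro j
        have hv : (σ : L → L)^[i] ((j : V) : L)
          + ∑ k : Fin i, a k * (σ : L → L)^[k] ((j : V) : L) = 0 := (j : V).2
        simp only [← mul_assoc, ← Finset.sum_mul]
        linear_combination c j * hv
      rw [Finset.sum_congr rfl (fun j _ => h1 j), Finset.sum_neg_distrib, Finset.sum_comm]
      simp only [← Finset.mul_sum, hc, mul_zero, Finset.sum_const_zero, neg_zero]
  have hker : ∃ c ∈ LinearMap.ker f, c ≠ 0 := by
    apply Submodule.exists_mem_ne_zero_of_ne_bot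
    apply LinearMap.ker_ne_bot_of_finrank_lt
    simpa using hlt
  obtain ⟨c, hc, hc0, hfix⟩ := exists_fixed_vec σ.symm (LinearMap.ker f) (by
    intro c hc
    rw [hf]
    intro i
    apply σ.injective
    have := hfr c hc (i + 1) i.2
    simpa [← Function.iterate_succ_apply' (σ : L → L)] using this) hker
  have hcF : ∀ j, c j ∈ F := fun j => by
    change σ (c j) = c j
    conv_lhs => rw [← hfix j]
    simp
  have h0 := hfr c hc 0 (Nat.zero_le _)
  rw [Fintype.linearIndependent_iff] at hs
  apply hc0
  funext j
  have := hs (fun j => ⟨c j, hcF j⟩) (by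
    apply Subtype.ext
    simp only [Submodule.coe_sum, Submodule.coe_smul]
    rw [Submodule.coe_zero, ← h0]
    exact Finset.sum_congr rfl fun j _ => mul_comm _ _) j
  exact congrArg Subtype.val this
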